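/- Fix t ∈ (0, 2π). Then there exists C > 0 such that for every integer ℓ ≥ 1: | ∫_{−1}^1 [ r·cos((ℓ+1)tr/2)/sin(tr/2) − cos((ℓ+1)t/2)/sin(t/2) ] / (t(1−r²)) dr + (log(t²) + 2γ)·cos((ℓ+1)t/2)/(t·sin(t/2)) + cos((ℓ+1)t/2)/(t·sin(t/2))·log(ℓ+1) − [ (π/2)·sin((ℓ+1)t/2) + (γ + log t)·cos((ℓ+1)t/2) ] / (t·sin(t/2)) | ≤ C/ℓ. -/

import Mathlib

open MeasureTheory Real

/-- The entire function `(1 - exp (-z)) / z`. -/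
noncomputable def Dfun : ℂ → ℂ := dslope (fun z : ℂ => 1 - Complex.exp (-z)) 0

lemma Dfun_diff : Differentiable ℂ Dfun := by
  have : DifferentiableOn ℂ Dfun Set.univ := by
    rw [Dfun, Complex.differentiableOn_dslope Filter.univ_mem]
    exact (by fun_prop : Differentiable ℂ (fun z : ℂ => 1 - Complex.exp (-z))).differentiableOn
  exact differentiableOn_univ.1 this

lemma Dfun_eq {z : ℂ} (hz : z ≠ 0) : Dfun z = (1 - Complex.exp (-z)) / z := by
  rw [Dfun, dslope_of_ne _ hz, slope_def_field]; simp

lemma mul_Dfun (z : ℂ) : z * Dfun z = 1 - Complex.exp (-z) := by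
  by_cases hz : z = 0
  · simp [hz]
  · rw [Dfun_eq hz]; field_simp

lemma exists_K : ∃ K : ℂ → ℂ, K 0 = 0 ∧ ∀ z, HasDerivAt K (Dfun z) z := by
  obtain ⟨F, hF⟩ := Dfun_diff.isExactOn_univ.with_val_at 0 0
  exact ⟨F, hF.1, fun z => hF.2 z (Set.mem_univ z)⟩

lemma integral_log_exp : ∫ s in Set.Ioi (0:ℝ), Real.log s * Real.exp (-s)
    = - Real.eulerMascheroniConstant := by
  have h1 := Complex.hasDerivAt_GammaIntegral (s := 1) (by simp)
  have h2 : HasDerivAt Complex.GammaIntegral (-(Real.eulerMascheroniConstant : ℂ)) 1 := by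
    refine Complex.hasDerivAt_Gamma_one.congr_of_eventuallyEq ?_
    have : IsOpen {s : ℂ | 0 < s.re} := Complex.continuous_re.isOpen_preimage _ isOpen_Ioi
    filter_upwards [this.mem_nhds (by simp : (1:ℂ) ∈ {s : ℂ | 0 < s.re})] with a ha
    exact (Complex.Gamma_eq_integral ha).symm
  have h3 := h1.unique h2
  simp only [sub_self, Complex.cpow_zero, one_mul] at h3
  have h4 : ((∫ s in Set.Ioi (0:ℝ), Real.log s * Real.exp (-s) : ℝ) : ℂ)
      = -(Real.eulerMascheroniConstant : ℂ) := by
    rw [← h3, ← integral_complex_ofReal]; push_cast; rfl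
  exact_mod_cast h4

lemma integrable_log_exp :
    IntegrableOn (fun s : ℝ => Real.log s * Real.exp (-s)) (Set.Ioi 0) := by
  by_contra h
  have := integral_log_exp
  rw [integral_undef h] at this
  have := Real.one_half_lt_eulerMascheroniConstant
  linarith

lemma tail_bound {x : ℝ} (hx : 1 ≤ x) :
    |∫ s in Set.Ioi x, Real.log s * Real.exp (-s)| ≤ 2 / x := by
  have hi : IntegrableOn (fun s : ℝ => Real.exp (-s) * s ^ ((3:ℝ) - 1)) (Set.Ioi 0) :=
    Real.GammaIntegral_convergent (by norm_num)
  have hsub : Set.Ioi x ⊆ Set.Ioi 0 := Set.Ioi_subset_Ioi (by linarith)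
  have hg : ∫ s in Set.Ioi (0:ℝ), Real.exp (-s) * s ^ ((3:ℝ) - 1) = 2 := by
    rw [← Real.Gamma_eq_integral (by norm_num)]
    have := Real.Gamma_nat_eq_factorial 2
    norm_num at this ⊢
  calc |∫ s in Set.Ioi x, Real.log s * Real.exp (-s)|
      ≤ ∫ s in Set.Ioi x, (1 / x) * (Real.exp (-s) * s ^ ((3:ℝ) - 1)) := by
        rw [← Real.norm_eq_abs]
        refine norm_integral_le_of_norm_le ((hi.mono_set hsub).const_mul _) ?_
        refine (ae_restrict_mem measurableSet_Ioi).mono fun s hs => ?_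
        have hs' : x < s := hs
        have h0 : 0 ≤ Real.log s := Real.log_nonneg (by linarith)
        have h1 : Real.log s ≤ s := (Real.log_le_sub_one_of_pos (by linarith)).trans (by linarith)
        rw [Real.norm_eq_abs, abs_of_nonneg (by positivity)]
        have : s ^ ((3:ℝ) - 1) = s ^ 2 := by norm_num
        rw [this]
        have : Real.log s ≤ 1 / x * s ^ 2 := by
          refine h1.trans ?_
          rw [one_div, ← div_eq_inv_mul, le_div_iff₀ (by linarith)]
          nlinarith
        calc _ ≤ (1 / x * s ^ 2) * Real.exp (-s) := by gcongr
          _ = _ := by ring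
    _ = (1 / x) * ∫ s in Set.Ioi x, (Real.exp (-s) * s ^ ((3:ℝ) - 1)) := by
        rw [integral_const_mul]
    _ ≤ (1 / x) * 2 := by
        gcongr
        rw [← hg]
        refine setIntegral_mono_set hi ?_ hsub.eventuallyLE
        refine (ae_restrict_mem measurableSet_Ioi).mono fun s hs => ?_
        have : 0 < s := hs
        simp only [Pi.zero_apply]; positivity
    _ = 2 / x := by ring

lemma K_real_deriv {K : ℂ → ℂ} (hK : ∀ z, HasDerivAt K (Dfun z) z) {x : ℝ} (hx : 0 < x) :
    HasDerivAt (fun y : ℝ => (K y).re) ((1 - Real.exp (-x)) / x) x := by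
  have := (hK x).real_of_complex
  rw [Dfun_eq (by exact_mod_cast hx.ne')] at this
  convert this using 1
  norm_cast

lemma K_real {K : ℂ → ℂ} (h0 : K 0 = 0) (hK : ∀ z, HasDerivAt K (Dfun z) z) {x : ℝ} (hx : 1 ≤ x) :
    |(K x).re - (Real.eulerMascheroniConstant + Real.log x)| ≤ 4 / x := by
  have hx0 : 0 < x := by linarith
  set φ : ℝ → ℝ := fun y => (K y).re - (1 - Real.exp (-y)) * Real.log y with hφ
  have hd : ∀ y : ℝ, 0 < y → HasDerivAt φ (-(Real.log y * Real.exp (-y))) y := by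
    intro y hy
    have h1 := K_real_deriv hK hy
    have h2 : HasDerivAt (fun y : ℝ => 1 - Real.exp (-y)) (Real.exp (-y)) y := by
      have := ((hasDerivAt_neg y).exp).const_sub 1
      simpa using this
    refine (h1.sub (h2.mul (Real.hasDerivAt_log hy.ne'))).congr_deriv ?_
    field_simp; ring
  have hcK : Continuous K := continuous_iff_continuousAt.2 fun z => (hK z).continuousAt
  have hlim : Filter.Tendsto φ (nhdsWithin 0 (Set.Ioi 0)) (nhds 0) := by
    have h1 : Filter.Tendsto (fun y : ℝ => (K y).re) (nhdsWithin 0 (Set.Ioi 0)) (nhds 0) := by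
      have : Continuous (fun y : ℝ => (K y).re) := by fun_prop
      have := this.tendsto 0
      simp only [Complex.ofReal_zero, h0, Complex.zero_re] at this
      exact this.mono_left nhdsWithin_le_nhds
    have h2 : Filter.Tendsto (fun y : ℝ => (1 - Real.exp (-y)) * Real.log y)
        (nhdsWithin 0 (Set.Ioi 0)) (nhds 0) := by
      have h3 : Filter.Tendsto (fun y : ℝ => Real.log y * y) (nhdsWithin 0 (Set.Ioi 0)) (nhds 0) := by
        simpa only [rpow_one] using tendsto_log_mul_rpow_nhdsGT_zero zero_lt_one
      have h3 := h3.norm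
      rw [norm_zero] at h3
      refine squeeze_zero_norm' ?_ h3
      filter_upwards [self_mem_nhdsWithin] with y hy
      have hy : 0 < y := hy
      have e1 := Real.add_one_le_exp (-y)
      have e2 : Real.exp (-y) ≤ 1 := Real.exp_le_one_iff.2 (by linarith)
      rw [norm_mul, norm_mul, mul_comm]
      gcongr
      rw [Real.norm_eq_abs, Real.norm_eq_abs, abs_of_nonneg (by linarith), abs_of_pos hy]
      linarith
    simpa using h1.sub h2
  have hint : IntervalIntegrable (fun y => -(Real.log y * Real.exp (-y))) volume 0 x := by
    rw [intervalIntegrable_iff_integrableOn_Ioc_of_le hx0.le]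
    exact (integrable_log_exp.mono_set Set.Ioc_subset_Ioi_self).neg
  have key := intervalIntegral.integral_eq_sub_of_hasDerivAt_of_tendsto hx0
    (fun y hy => hd y hy.1) hint hlim ((hd x hx0).continuousAt.tendsto.mono_left nhdsWithin_le_nhds)
  rw [intervalIntegral.integral_neg, intervalIntegral.integral_of_le hx0.le, sub_zero] at key
  have hsplit : ∫ s in Set.Ioi (0:ℝ), Real.log s * Real.exp (-s)
      = (∫ s in Set.Ioc 0 x, Real.log s * Real.exp (-s))
        + ∫ s in Set.Ioi x, Real.log s * Real.exp (-s) := by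
    rw [← setIntegral_union (Set.Ioc_disjoint_Ioi le_rfl) measurableSet_Ioi
      (integrable_log_exp.mono_set Set.Ioc_subset_Ioi_self)
      (integrable_log_exp.mono_set (Set.Ioi_subset_Ioi hx0.le)), Set.Ioc_union_Ioi_eq_Ioi hx0.le]
  rw [integral_log_exp] at hsplit
  have hkx : (K x).re - (Real.eulerMascheroniConstant + Real.log x)
      = (∫ s in Set.Ioi x, Real.log s * Real.exp (-s)) - Real.exp (-x) * Real.log x := by
    have : φ x = (K x).re - (1 - Real.exp (-x)) * Real.log x := rfl
    linarith
  rw [hkx]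
  have h1 := tail_bound hx
  have h2 : |Real.exp (-x) * Real.log x| ≤ 2 / x := by
    have hl : 0 ≤ Real.log x := Real.log_nonneg hx
    have hl' : Real.log x ≤ x := (Real.log_le_sub_one_of_pos (by linarith)).trans (by linarith)
    rw [abs_of_nonneg (by positivity), le_div_iff₀ hx0, Real.exp_neg, mul_assoc, ← div_eq_inv_mul,
      div_le_iff₀ (Real.exp_pos x)]
    have := Real.quadratic_le_exp_of_nonneg hx0.le
    nlinarith
  calc _ ≤ _ := abs_sub _ _
    _ ≤ 2 / x + 2 / x := add_le_add h1 h2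
    _ = 4 / x := by ring

lemma K_real_im {K : ℂ → ℂ} (h0 : K 0 = 0) (hK : ∀ z, HasDerivAt K (Dfun z) z) {x : ℝ}
    (hx : 0 ≤ x) : (K x).im = 0 := by
  have hcK : Continuous K := continuous_iff_continuousAt.2 fun z => (hK z).continuousAt
  have hd : ∀ y ∈ Set.Ioo 0 x, HasDerivAt (fun y : ℝ => (K y).im) 0 y := by
    intro y hy
    have h1 := (hK y).comp_ofReal
    have h2 := (Complex.imCLM.hasFDerivAt.comp_hasDerivAt y h1)
    refine h2.congr_deriv ?_
    rw [Dfun_eq (by exact_mod_cast hy.1.ne'), Complex.imCLM_apply]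
    have : (1 - Complex.exp (-(y:ℂ))) / (y:ℂ) = (((1 - Real.exp (-y)) / y : ℝ) : ℂ) := by
      push_cast; rfl
    rw [this, Complex.ofReal_im]
  have := intervalIntegral.integral_eq_sub_of_hasDerivAt_of_le hx
    (by fun_prop : Continuous (fun y : ℝ => (K y).im)).continuousOn hd (by simp)
  simp [h0] at this
  exact this.symm

lemma K_rot {K : ℂ → ℂ} (hK : ∀ z, HasDerivAt K (Dfun z) z) {x : ℝ}
    (hx : 1 ≤ x) : ‖K (-Complex.I * x) - K x + Complex.I * (π / 2 : ℝ)‖ ≤ 2 / x := by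
  have hx0 : 0 < x := by linarith
  have hd : ∀ φ : ℝ, HasDerivAt (fun φ : ℝ => K (x * Complex.exp (-Complex.I * φ)) + Complex.I * φ)
      (Complex.I * Complex.exp (-(x * Complex.exp (-Complex.I * φ)))) φ := by
    intro φ
    have h1 : HasDerivAt (fun φ : ℝ => (x:ℂ) * Complex.exp (-Complex.I * φ))
        (x * (Complex.exp (-Complex.I * φ) * (-Complex.I * 1))) φ :=
      ((((hasDerivAt_id (φ:ℂ)).const_mul (-Complex.I)).cexp).const_mul (x:ℂ)).comp_ofReal
    have h2 := (hK (x * Complex.exp (-Complex.I * φ))).comp φ h1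
    have h3 : HasDerivAt (fun φ : ℝ => Complex.I * (φ:ℂ)) (Complex.I * 1) φ :=
      ((hasDerivAt_id (φ:ℂ)).const_mul (Complex.I)).comp_ofReal
    refine (h2.add h3).congr_deriv ?_
    have := mul_Dfun (x * Complex.exp (-Complex.I * φ))
    linear_combination (-Complex.I) * this
  have hint := intervalIntegral.integral_eq_sub_of_hasDerivAt (a := 0) (b := π / 2)
    (fun φ _ => hd φ) (Continuous.intervalIntegrable (by fun_prop) _ _)
  have he : Complex.exp (-Complex.I * (π / 2 : ℝ)) = -Complex.I := by
    rw [neg_mul, mul_comm, ← neg_mul, ← Complex.ofReal_neg, Complex.exp_mul_I, ← Complex.ofReal_cos,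
      ← Complex.ofReal_sin]
    simp
  rw [he] at hint
  simp only [Complex.ofReal_zero, mul_zero, Complex.exp_zero, mul_one, add_zero] at hint
  have : K (-Complex.I * x) - K x + Complex.I * (π / 2 : ℝ)
    = K (x * -Complex.I) + Complex.I * (π / 2 : ℝ) - K x := by rw [mul_comm]; ring
  rw [this, ← hint]
  have hpi := Real.pi_pos
  have hb : ∀ φ ∈ Set.Ioc 0 (π / 2), ‖Complex.I * Complex.exp (-(x * Complex.exp (-Complex.I * φ)))‖
      ≤ Real.exp (-x + (2 * x / π) * φ) := by
    intro φ hφ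
    rw [norm_mul, Complex.norm_I, one_mul, Complex.norm_exp]
    apply Real.exp_le_exp.2
    have : (Complex.exp (-Complex.I * φ)).re = Real.cos φ := by
      rw [Complex.exp_re]; simp
    rw [Complex.neg_re, Complex.re_ofReal_mul, this]
    have := Real.one_sub_mul_le_cos hφ.1.le hφ.2
    have := mul_le_mul_of_nonneg_left this hx0.le
    have e : 2 * x / π * φ = x * (2 / π * φ) := by ring
    rw [e]; linarith
  have hc : (2 * x / π) ≠ 0 := by positivity
  have hd2 : ∀ φ : ℝ, HasDerivAt (fun φ : ℝ => Real.exp (-x + (2 * x / π) * φ) / (2 * x / π))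
      (Real.exp (-x + (2 * x / π) * φ)) φ := by
    intro φ
    have := ((((hasDerivAt_id φ).const_mul (2 * x / π)).const_add (-x)).exp).div_const (2 * x / π)
    refine this.congr_deriv ?_
    simp only [id]; field_simp
  have hint2 := intervalIntegral.integral_eq_sub_of_hasDerivAt (a := 0) (b := π / 2)
    (fun φ _ => hd2 φ) (Continuous.intervalIntegrable (by fun_prop) _ _)
  have := intervalIntegral.norm_integral_le_of_norm_le (a := 0) (b := π / 2) (μ := volume)
    (by positivity) (Filter.Eventually.of_forall hb)
    (Continuous.intervalIntegrable (by fun_prop) _ _)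
  refine this.trans ?_
  rw [hint2]
  have e1 : -x + 2 * x / π * (π / 2) = 0 := by field_simp; ring
  rw [e1, Real.exp_zero, ← sub_div, div_div_eq_mul_div]
  have := Real.exp_pos (-x + 2 * x / π * 0)
  have := Real.pi_le_four
  rw [div_le_div_iff₀ (by positivity) hx0]
  nlinarith [mul_pos hpi (Real.exp_pos (-x + 2 * x / π * 0))]


lemma eventually_to_all (E : ℕ → ℝ) (C : ℝ) (hC : 0 ≤ C) (N : ℕ)
    (h : ∀ n : ℕ, 1 ≤ n → N ≤ n → |E n| ≤ C / n) :
    ∃ C' : ℝ, 0 < C' ∧ ∀ n : ℕ, 1 ≤ n → |E n| ≤ C' / n := by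
  have hs : 0 ≤ ∑ i ∈ Finset.range N, |E i| * i := Finset.sum_nonneg fun i _ => by positivity
  refine ⟨C + 1 + ∑ i ∈ Finset.range N, |E i| * i, by linarith, fun n hn => ?_⟩
  have hn0 : (0:ℝ) < n := by exact_mod_cast hn
  rw [le_div_iff₀ hn0]
  by_cases hN : N ≤ n
  · have := h n hn hN
    rw [le_div_iff₀ hn0] at this
    linarith
  · have := Finset.single_le_sum (f := fun i : ℕ => |E i| * (i:ℝ)) (s := Finset.range N)
      (fun i _ => by positivity) (Finset.mem_range.2 (not_le.1 hN))
    linarith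

/-- Continuous extension of `(cos (a r) - cos a) / (1 - r)`. -/
noncomputable def qfun (a r : ℝ) : ℝ :=
  (Complex.exp (-Complex.I * a) * (Complex.I * a * Dfun (-Complex.I * a * (1 - r)))).re

lemma qfun_cont (a : ℝ) : Continuous (qfun a) := by
  have := Dfun_diff.continuous
  unfold qfun
  fun_prop

lemma qfun_mul (a r : ℝ) : qfun a r * (1 - r) = Real.cos (a * r) - Real.cos a := by
  have h1 := mul_Dfun (-Complex.I * a * (1 - r))
  have h2 : Complex.exp (-Complex.I * a) * Complex.exp (-(-Complex.I * a * (1 - r)))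
      = Complex.exp (-Complex.I * (a * r : ℝ)) := by
    rw [← Complex.exp_add]; congr 1; push_cast; ring
  have h3 : Complex.exp (-Complex.I * a) * (Complex.I * a * Dfun (-Complex.I * a * (1 - r)))
      * ((1 - r : ℝ) : ℂ) = Complex.exp (-Complex.I * (a * r : ℝ)) - Complex.exp (-Complex.I * a) := by
    rw [← h2]; push_cast
    linear_combination (-Complex.exp (-Complex.I * a)) * h1
  have h4 : ∀ y : ℝ, (Complex.exp (-Complex.I * y)).re = Real.cos y := by
    intro y; rw [Complex.exp_re]; simp
  have h5 := congrArg Complex.re h3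
  rw [Complex.re_mul_ofReal, Complex.sub_re, h4, h4] at h5
  exact h5

lemma qfun_integral {K : ℂ → ℂ} (h0 : K 0 = 0) (hK : ∀ z, HasDerivAt K (Dfun z) z) (a : ℝ) :
    ∫ r in (-1:ℝ)..1, qfun a r
      = -(Complex.exp (-Complex.I * a) * K (-Complex.I * ((2 * a : ℝ) : ℂ))).re := by
  have hd : ∀ r : ℝ, HasDerivAt
      (fun r : ℝ => (Complex.exp (-Complex.I * a) * K (-Complex.I * a * (1 - r))).re) (qfun a r) r := by
    intro r
    have h1 : HasDerivAt (fun z : ℂ => -Complex.I * a * (1 - z)) (-Complex.I * a * (-1)) (r:ℂ) :=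
      (((hasDerivAt_id (r:ℂ)).const_sub 1)).const_mul _
    have h2 := (((hK (-Complex.I * a * (1 - r))).comp (r:ℂ) h1).const_mul
      (Complex.exp (-Complex.I * a))).real_of_complex
    refine h2.congr_deriv ?_
    unfold qfun
    congr 1; ring
  have := intervalIntegral.integral_eq_sub_of_hasDerivAt (a := -1) (b := 1)
    (fun r _ => hd r) ((qfun_cont a).intervalIntegrable _ _)
  rw [this]
  have e : -Complex.I * a * (1 - ((-1:ℝ):ℂ)) = -Complex.I * ((2 * a : ℝ) : ℂ) := by
    push_cast; ring
  rw [e]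
  simp [h0]

lemma qfun_asymp {K : ℂ → ℂ} (h0 : K 0 = 0) (hK : ∀ z, HasDerivAt K (Dfun z) z) (a : ℝ)
    (ha : 1 ≤ 2 * a) :
    |(∫ r in (-1:ℝ)..1, qfun a r)
      - (-(Real.eulerMascheroniConstant + Real.log (2 * a)) * Real.cos a + π / 2 * Real.sin a)|
      ≤ 6 / (2 * a) := by
  have h1 := K_real h0 hK ha
  have h2 := K_real_im h0 hK (x := 2 * a) (by linarith)
  have h3 := K_rot hK ha
  rw [qfun_integral h0 hK]
  set x := 2 * a
  set W := K (-Complex.I * x) - K x + Complex.I * (π / 2 : ℝ) with hW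
  have hKx : K x = ((K x).re : ℂ) := by
    apply Complex.ext <;> simp [h2]
  have e : K (-Complex.I * x) = W + ((K x).re : ℂ) - Complex.I * (π / 2 : ℝ) := by
    rw [hW, ← hKx]; ring
  have hre : (Complex.exp (-Complex.I * a)).re = Real.cos a := by
    rw [Complex.exp_re]; simp
  have him : (Complex.exp (-Complex.I * a)).im = -Real.sin a := by
    rw [Complex.exp_im]; simp
  have e2 : (Complex.exp (-Complex.I * a) * K (-Complex.I * x)).re
      = (Complex.exp (-Complex.I * a) * W).re + Real.cos a * (K x).re - π / 2 * Real.sin a := by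
    rw [e]
    generalize Complex.exp (-Complex.I * a) = E at hre him
    simp only [Complex.mul_re, Complex.sub_re, Complex.add_re, Complex.sub_im, Complex.add_im,
      Complex.mul_im, Complex.ofReal_re, Complex.ofReal_im, Complex.I_re, Complex.I_im, hre, him]
    ring
  rw [e2]
  have b1 : |(Complex.exp (-Complex.I * a) * W).re| ≤ 2 / x := by
    refine (Complex.abs_re_le_norm _).trans ?_
    rw [norm_mul, Complex.norm_exp]
    simpa using h3
  have b2 : |Real.cos a * ((K x).re - (Real.eulerMascheroniConstant + Real.log x))| ≤ 4 / x := by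
    rw [abs_mul]
    calc _ ≤ 1 * (4 / x) := mul_le_mul (Real.abs_cos_le_one a) h1 (abs_nonneg _) zero_le_one
      _ = _ := one_mul _
  have e3 : 6 / x = 2 / x + 4 / x := by ring
  rw [e3, abs_le]
  rw [abs_le] at b1 b2
  constructor <;> linarith [b1.1, b1.2, b2.1, b2.2]

lemma exists_g (t : ℝ) (ht : t ∈ Set.Ioo 0 (2 * π)) : ∃ g g' : ℝ → ℝ,
    (∀ r ∈ Set.Icc (-1:ℝ) 1, HasDerivAt g (g' r) r) ∧ ContinuousOn g' (Set.Icc (-1) 1) ∧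
    ∀ r ∈ Set.Ioo (-1:ℝ) 1, r ≠ 0 →
      g r * (1 - r) = r / Real.sin (t * r / 2) - 1 / Real.sin (t / 2) := by
  obtain ⟨ht0, ht2⟩ := ht
  have htc : (t:ℂ) ≠ 0 := by exact_mod_cast ht0.ne'
  set S : ℂ → ℂ := dslope (fun z : ℂ => Complex.sin (t * z / 2)) 0 with hS
  have hSd : Differentiable ℂ S := by
    have : DifferentiableOn ℂ S Set.univ := by
      rw [hS, Complex.differentiableOn_dslope Filter.univ_mem]
      exact (by fun_prop : Differentiable ℂ (fun z : ℂ => Complex.sin (t * z / 2))).differentiableOn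
    exact differentiableOn_univ.1 this
  have hSeq : ∀ z : ℂ, z ≠ 0 → S z = Complex.sin (t * z / 2) / z := by
    intro z hz
    rw [hS, dslope_of_ne _ hz, slope_def_field]; simp
  have hS0 : S 0 = t / 2 := by
    rw [hS, dslope_same]
    have h1 : HasDerivAt (fun z : ℂ => (t:ℂ) * z / 2) (t * 1 / 2) 0 :=
      ((hasDerivAt_id (0:ℂ)).const_mul (t:ℂ)).div_const 2
    have := h1.csin.deriv
    rw [this]; simp
  set U : Set ℂ := {z | |z.re| < 2 * π / t} with hU
  have hUo : IsOpen U := isOpen_lt (by fun_prop) continuous_const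
  have hSne : ∀ z ∈ U, S z ≠ 0 := by
    intro z hz
    by_cases h : z = 0
    · rw [h, hS0]; exact div_ne_zero htc two_ne_zero
    · rw [hSeq z h]
      refine div_ne_zero (fun hs => ?_) h
      obtain ⟨k, hk⟩ := Complex.sin_eq_zero_iff.1 hs
      have hz' : z = ((2 * k * π / t : ℝ) : ℂ) := by
        push_cast; field_simp; linear_combination 2 * hk
      have hk0 : k ≠ 0 := by
        rintro rfl; apply h; rw [hz']; simp
      have : |z.re| < 2 * π / t := hz
      rw [hz', Complex.ofReal_re, abs_div, abs_mul, abs_mul, abs_of_pos ht0,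
        abs_of_pos Real.pi_pos, div_lt_div_iff_of_pos_right ht0] at this
      have hk1 : (1:ℝ) ≤ |(k:ℝ)| := by exact_mod_cast Int.one_le_abs hk0
      have hpi := Real.pi_pos
      norm_num at this
      nlinarith
  have hreal : ∀ r ∈ Set.Icc (-1:ℝ) 1, (r:ℂ) ∈ U := by
    intro r hr
    show |(r:ℂ).re| < _
    rw [Complex.ofReal_re]
    refine (abs_le.2 hr).trans_lt ?_
    rw [lt_div_iff₀ ht0]; linarith
  set F : ℂ → ℂ := fun z => (S z)⁻¹ with hF
  have hFd : DifferentiableOn ℂ F U := hSd.differentiableOn.inv hSne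
  set G : ℂ → ℂ := fun z => - dslope F 1 z with hG
  have h1U : (1:ℂ) ∈ U := by simpa using hreal 1 (by norm_num)
  have hGd : DifferentiableOn ℂ G U :=
    ((Complex.differentiableOn_dslope (hUo.mem_nhds h1U)).2 hFd).neg
  have hG'd : ContinuousOn (deriv G) U := (hGd.deriv hUo).continuousOn
  refine ⟨fun r => (G r).re, fun r => (deriv G r).re, fun r hr => ?_, ?_, ?_⟩
  · exact ((hGd.differentiableAt (hUo.mem_nhds (hreal r hr))).hasDerivAt).real_of_complex
  · exact Complex.continuous_re.comp_continuousOn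
      (hG'd.comp Complex.continuous_ofReal.continuousOn hreal)
  · intro r hr hr0
    have hr1 : (r:ℂ) ≠ 1 := by exact_mod_cast hr.2.ne
    have hr1' : (r:ℂ) - 1 ≠ 0 := sub_ne_zero.2 hr1
    have e : G r * ((1 - r : ℝ) : ℂ)
        = ((r / Real.sin (t * r / 2) - 1 / Real.sin (t / 2) : ℝ) : ℂ) := by
      simp only [hG, hF]
      rw [dslope_of_ne _ hr1, slope_def_field, hSeq r (by exact_mod_cast hr0),
        hSeq 1 one_ne_zero]
      push_cast
      rw [inv_div, inv_div, mul_one, neg_mul, div_mul_eq_mul_div, neg_eq_iff_eq_neg,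
        div_eq_iff hr1']
      ring
    have := congrArg Complex.re e
    rw [Complex.re_mul_ofReal, Complex.ofReal_re] at this
    exact this

lemma ibp_bound (g g' : ℝ → ℝ) (hg : ∀ r ∈ Set.Icc (-1:ℝ) 1, HasDerivAt g (g' r) r)
    (hc : ContinuousOn g' (Set.Icc (-1) 1)) :
    ∃ C : ℝ, 0 ≤ C ∧ ∀ a : ℝ, 0 < a → |∫ r in (-1:ℝ)..1, g r * Real.cos (a * r)| ≤ C / a := by
  obtain ⟨M, hM⟩ := isCompact_Icc.exists_bound_of_continuousOn hc
  have hM0 : 0 ≤ M := (norm_nonneg _).trans (hM 0 (by norm_num))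
  refine ⟨|g 1| + |g (-1)| + 2 * M, by positivity, fun a ha => ?_⟩
  have hu : Set.uIcc (-1:ℝ) 1 = Set.Icc (-1) 1 := Set.uIcc_of_le (by norm_num)
  have hv : ∀ r : ℝ, HasDerivAt (fun r => Real.sin (a * r) / a) (Real.cos (a * r)) r := by
    intro r
    have := (((hasDerivAt_id r).const_mul a).sin).div_const a
    refine this.congr_deriv ?_
    simp only [id]; field_simp
  have key := intervalIntegral.integral_mul_deriv_eq_deriv_mul (a := -1) (b := 1)
    (u := g) (u' := g') (v := fun r => Real.sin (a * r) / a) (v' := fun r => Real.cos (a * r))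
    (by rw [hu]; exact hg) (fun r _ => hv r)
    (by apply ContinuousOn.intervalIntegrable; rw [hu]; exact hc)
    (Continuous.intervalIntegrable (by fun_prop) _ _)
  rw [key]
  have hs : ∀ y : ℝ, |Real.sin y / a| ≤ 1 / a := fun y => by
    rw [abs_div, abs_of_pos ha]; gcongr; exact Real.abs_sin_le_one y
  have b1 : |g 1 * (Real.sin (a * 1) / a)| ≤ |g 1| * (1 / a) := by
    rw [abs_mul]; gcongr; exact hs _
  have b2 : |g (-1) * (Real.sin (a * (-1)) / a)| ≤ |g (-1)| * (1 / a) := by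
    rw [abs_mul]; gcongr; exact hs _
  have b3 : |∫ r in (-1:ℝ)..1, g' r * (Real.sin (a * r) / a)| ≤ M * (1 / a) * |1 - (-1)| := by
    rw [← Real.norm_eq_abs (∫ r in (-1:ℝ)..1, _)]
    refine intervalIntegral.norm_integral_le_of_norm_le_const fun r hr => ?_
    rw [norm_mul]
    have hr' : r ∈ Set.Icc (-1:ℝ) 1 := by
      rw [← hu]; exact Set.uIoc_subset_uIcc hr
    exact mul_le_mul (hM r hr') (hs _) (abs_nonneg _) hM0
  have e : (|g 1| + |g (-1)| + 2 * M) / a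
      = |g 1| * (1 / a) + |g (-1)| * (1 / a) + M * (1 / a) * |1 - (-1)| := by
    norm_num; ring
  rw [e]
  exact (abs_sub _ _).trans (add_le_add ((abs_sub _ _).trans (add_le_add b1 b2)) b3)

lemma main_integral (t : ℝ) (ht : t ∈ Set.Ioo 0 (2 * π)) (g g' : ℝ → ℝ)
    (hg : ∀ r ∈ Set.Icc (-1:ℝ) 1, HasDerivAt g (g' r) r)
    (hge : ∀ r ∈ Set.Ioo (-1:ℝ) 1, r ≠ 0 →
      g r * (1 - r) = r / Real.sin (t * r / 2) - 1 / Real.sin (t / 2)) (ℓ : ℕ) :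
    (∫ r in Set.Ioo (-1 : ℝ) 1,
          (r * Real.cos (((ℓ : ℝ) + 1) * t * r / 2) / Real.sin (t * r / 2)
              - Real.cos (((ℓ : ℝ) + 1) * t / 2) / Real.sin (t / 2)) / (t * (1 - r ^ 2)))
    = (1 / t) * ((∫ r in (-1:ℝ)..1, g r * Real.cos ((((ℓ : ℝ) + 1) * t / 2) * r))
        + 1 / Real.sin (t / 2) * ∫ r in (-1:ℝ)..1, qfun (((ℓ : ℝ) + 1) * t / 2) r) := by
  obtain ⟨ht0, ht2⟩ := ht
  set a := ((ℓ : ℝ) + 1) * t / 2 with ha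
  have hu : Set.uIcc (-1:ℝ) 1 = Set.Icc (-1) 1 := Set.uIcc_of_le (by norm_num)
  have hgc : ContinuousOn g (Set.Icc (-1) 1) := fun r hr => (hg r hr).continuousAt.continuousWithinAt
  have i1 : IntervalIntegrable (fun r => g r * Real.cos (a * r)) volume (-1) 1 := by
    apply ContinuousOn.intervalIntegrable; rw [hu]
    exact hgc.mul (by fun_prop : Continuous fun r : ℝ => Real.cos (a * r)).continuousOn
  have i2 : IntervalIntegrable (fun r => 1 / Real.sin (t / 2) * qfun a r) volume (-1) 1 :=
    ((qfun_cont a).intervalIntegrable _ _).const_mul _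
  set p : ℝ → ℝ := fun r => g r * Real.cos (a * r) + 1 / Real.sin (t / 2) * qfun a r with hp
  have i3 : IntervalIntegrable p volume (-1) 1 := i1.add i2
  have i4 : IntervalIntegrable (fun r => p (-r)) volume (-1) 1 := by
    have := i3.symm
    have := (IntervalIntegrable.iff_comp_neg).1 this
    simpa using this
  have hpI : ∫ r in (-1:ℝ)..1, p (-r) = ∫ r in (-1:ℝ)..1, p r := by
    rw [intervalIntegral.integral_comp_neg]; simp
  have hpe : ∫ r in (-1:ℝ)..1, p r = (∫ r in (-1:ℝ)..1, g r * Real.cos (a * r))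
        + 1 / Real.sin (t / 2) * ∫ r in (-1:ℝ)..1, qfun a r := by
    rw [hp, intervalIntegral.integral_add i1 i2, intervalIntegral.integral_const_mul]
  have hpm : ∀ r ∈ Set.Ioo (-1:ℝ) 1, r ≠ 0 → p r * (1 - r)
      = r * Real.cos (a * r) / Real.sin (t * r / 2) - Real.cos a / Real.sin (t / 2) := by
    intro r hr h0
    have h1 := hge r hr h0
    have h2 := qfun_mul a r
    simp only [hp]
    linear_combination Real.cos (a * r) * h1 + 1 / Real.sin (t / 2) * h2
  rw [← hpe]
  have hfin : (1 / t) * ∫ r in (-1:ℝ)..1, p r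
      = ∫ r in (-1:ℝ)..1, (1 / (2 * t)) * (p r + p (-r)) := by
    rw [intervalIntegral.integral_const_mul, intervalIntegral.integral_add i3 i4, hpI]
    field_simp; ring
  rw [hfin, intervalIntegral.integral_of_le (by norm_num), integral_Ioc_eq_integral_Ioo]
  apply integral_congr_ae
  have hne : ∀ᵐ r : ℝ ∂(volume.restrict (Set.Ioo (-1:ℝ) 1)), r ≠ 0 :=
    ae_restrict_of_ae (by simp [ae_iff])
  filter_upwards [hne, ae_restrict_mem measurableSet_Ioo] with r h0 hr
  have hr' : -r ∈ Set.Ioo (-1:ℝ) 1 := ⟨by linarith [hr.2], by linarith [hr.1]⟩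
  have e1 := hpm r hr h0
  have e2 := hpm (-r) hr' (neg_ne_zero.2 h0)
  have e3 : t * -r / 2 = -(t * r / 2) := by ring
  rw [mul_neg, Real.cos_neg, e3, Real.sin_neg, neg_mul, neg_div_neg_eq, ← e1] at e2
  have e4 : ((ℓ : ℝ) + 1) * t * r / 2 = a * r := by rw [ha]; ring
  rw [e4, ← e1]
  have n1 : 1 - r ≠ 0 := by linarith [hr.2]
  have n2 : 1 + r ≠ 0 := by linarith [hr.1]
  have n3 : 1 - r ^ 2 ≠ 0 := by
    have : 1 - r ^ 2 = (1 - r) * (1 + r) := by ring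
    rw [this]; exact mul_ne_zero n1 n2
  rw [div_eq_iff (mul_ne_zero ht0.ne' n3)]
  field_simp
  linear_combination (-(1 - r)) * e2

theorem stmt_11 (t : ℝ) (ht : t ∈ Set.Ioo 0 (2 * π)) :
    ∃ C : ℝ, 0 < C ∧ ∀ ℓ : ℕ, 1 ≤ ℓ →
      |(∫ r in Set.Ioo (-1 : ℝ) 1,
          (r * Real.cos (((ℓ : ℝ) + 1) * t * r / 2) / Real.sin (t * r / 2)
              - Real.cos (((ℓ : ℝ) + 1) * t / 2) / Real.sin (t / 2)) / (t * (1 - r ^ 2)))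
        + (Real.log (t ^ 2) + 2 * Real.eulerMascheroniConstant)
            * Real.cos (((ℓ : ℝ) + 1) * t / 2) / (t * Real.sin (t / 2))
        + Real.cos (((ℓ : ℝ) + 1) * t / 2) / (t * Real.sin (t / 2)) * Real.log ((ℓ : ℝ) + 1)
        - ((π / 2) * Real.sin (((ℓ : ℝ) + 1) * t / 2)
            + (Real.eulerMascheroniConstant + Real.log t) * Real.cos (((ℓ : ℝ) + 1) * t / 2))
          / (t * Real.sin (t / 2))|
      ≤ C / (ℓ : ℝ) := by
  obtain ⟨g, g', hg, hgc, hge⟩ := exists_g t ht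
  obtain ⟨C, hC, hCb⟩ := ibp_bound g g' hg hgc
  obtain ⟨K, h0, hK⟩ := exists_K
  obtain ⟨ht0, ht2⟩ := id ht
  have hs : 0 < Real.sin (t / 2) := Real.sin_pos_of_pos_of_lt_pi (by linarith) (by linarith)
  obtain ⟨N, hN⟩ := exists_nat_gt (1 / t)
  refine eventually_to_all _ ((1 / t) * (C * (2 / t) + 1 / Real.sin (t / 2) * (6 / t)))
    (by positivity) N fun ℓ hl hNl => ?_
  rw [main_integral t ht g g' hg hge ℓ]
  have hl0 : (0:ℝ) < ℓ := by exact_mod_cast hl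
  have hx : 1 ≤ ((ℓ:ℝ) + 1) * t := by
    have : (N:ℝ) ≤ ℓ := by exact_mod_cast hNl
    rw [← div_le_iff₀ ht0]; linarith
  have hlog : Real.log (((ℓ:ℝ) + 1) * t) = Real.log ((ℓ:ℝ) + 1) + Real.log t :=
    Real.log_mul (by positivity) ht0.ne'
  set a := ((ℓ : ℝ) + 1) * t / 2 with ha
  have h2a : 2 * a = ((ℓ : ℝ) + 1) * t := by rw [ha]; ring
  have ha0 : 0 < a := by linarith
  have b1 := hCb a ha0
  have b2 := qfun_asymp h0 hK a (by linarith)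
  rw [h2a, hlog] at b2
  rw [Real.log_pow]
  set A := ∫ r in (-1:ℝ)..1, g r * Real.cos (a * r)
  set B := ∫ r in (-1:ℝ)..1, qfun a r
  have e : 1 / t * (A + 1 / Real.sin (t / 2) * B)
      + (((2:ℕ):ℝ) * Real.log t + 2 * Real.eulerMascheroniConstant) * Real.cos a
        / (t * Real.sin (t / 2))
      + Real.cos a / (t * Real.sin (t / 2)) * Real.log ((ℓ : ℝ) + 1)
      - (π / 2 * Real.sin a + (Real.eulerMascheroniConstant + Real.log t) * Real.cos a)
        / (t * Real.sin (t / 2))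
      = 1 / t * (A + 1 / Real.sin (t / 2) * (B - (-(Real.eulerMascheroniConstant
        + (Real.log ((ℓ:ℝ) + 1) + Real.log t)) * Real.cos a + π / 2 * Real.sin a))) := by
    push_cast; field_simp; ring
  rw [e, abs_mul, abs_of_pos (by positivity : 0 < 1 / t)]
  have c1 : C / a ≤ C * (2 / t) / ℓ := by
    have : C * (2 / t) / ℓ = C / (ℓ * t / 2) := by field_simp
    rw [this]
    gcongr
    rw [ha]; gcongr; linarith
  have c2 : 6 / (((ℓ:ℝ) + 1) * t) ≤ 6 / t / ℓ := by
    rw [div_div]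
    rw [mul_comm t]
    gcongr
    linarith
  have e2 : 1 / t * (C * (2 / t) + 1 / Real.sin (t / 2) * (6 / t)) / (ℓ:ℝ)
      = 1 / t * (C * (2 / t) / ℓ + 1 / Real.sin (t / 2) * (6 / t / ℓ)) := by ring
  rw [e2]
  gcongr
  refine (abs_add_le _ _).trans (add_le_add (b1.trans c1) ?_)
  rw [abs_mul, abs_of_pos (by positivity : 0 < 1 / Real.sin (t / 2))]
  gcongr
  exact b2.trans c2
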